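/- arXiv:1310.4313 — 5 statements merged into one kernel-verified Lean document; each statement's English description precedes it below -/
import Mathlib

section
/- Let S be a Hausdorff topological space with an associative multiplication such that for every a ∈ S the left translation x ↦ a·x is continuous. Suppose 0 ∈ S satisfies x·0 = 0 for all x ∈ S, the set G = S ∖ {0} is closed under multiplication, and G is a group under the induced multiplication. If G, with the subspace topology, is left precompact, then 0 is an isolated point of S. -/
/-!
Separate the identity `e` from the zero `z`: some neighborhood `U` of `e` has `z ∉ closure U`.
For `f ≠ z`, left translation by `f⁻¹` fixes `z`, is continuous there, and maps `f * U` back to `U`,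
so `z ∉ closure (f * U)`. By precompactness finitely many of the sets `f * U` cover `{z}ᶜ`, and
a finite union of closures is closed, so `z ∉ closure {z}ᶜ`.
-/

open Set
open scoped Pointwise Topology

theorem notMem_closure_image_of_leftInvOn {X Y : Type*} [TopologicalSpace X] [TopologicalSpace Y]
    {f : Y → X} {g : X → Y} {A : Set Y} {x : X} (hgf : LeftInvOn g f A) (hg : ContinuousAt g x)
    (hx : g x ∉ closure A) : x ∉ closure (f '' A) := fun hxA ↦
  hx (hgf.image_image ▸ mem_closure_image hg hxA)

section RightZero

variable {S : Type*} [Semigroup S] [TopologicalSpace S] {z e : S}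

theorem notMem_closure_mul_of_finite {F A : Set S} (hF : F.Finite) (hz : ∀ x : S, x * z = z)
    (hcont : ∀ a : S, ContinuousAt (a * ·) z) (hinv : ∀ f ∈ F, ∃ g, ∀ a ∈ A, g * f * a = a)
    (hA : z ∉ closure A) : z ∉ closure (F * A) := by
  rw [← iUnion_mul_left_image, hF.closure_biUnion]
  simp only [mem_iUnion, not_exists]
  intro f hf
  obtain ⟨g, hgf⟩ := hinv f hf
  have hleft : LeftInvOn (g * ·) (f * ·) A := fun a ha ↦ (mul_assoc g f a).symm.trans (hgf a ha)
  exact notMem_closure_image_of_leftInvOn hleft (hcont g) (by rwa [hz])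

theorem stmt_0_general (hcont : ∀ a : S, ContinuousAt (a * ·) z) (hz : ∀ x : S, x * z = z)
    (hsep : Disjoint (𝓝 e) (𝓝 z)) (hone : ∀ x ≠ z, e * x = x) (hinv : ∀ x ≠ z, ∃ y, y * x = e)
    (hpre : ∀ U : Set S, U ⊆ {z}ᶜ → U ∈ 𝓝[{z}ᶜ] e →
      ∃ F : Set S, F ⊆ {z}ᶜ ∧ F.Finite ∧ ∀ x ≠ z, ∃ f ∈ F, ∃ u ∈ U, x = f * u) :
    IsOpen {z} := by
  obtain ⟨U, hU, hUz⟩ := (𝓝 e).basis_sets.disjoint_iff_left.mp hsep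
  have hzU : z ∉ closure U := by
    rwa [← mem_compl_iff, ← interior_compl, mem_interior_iff_mem_nhds]
  obtain ⟨F, hFz, hF, hcover⟩ := hpre (U ∩ {z}ᶜ) inter_subset_right
    (Filter.inter_mem (mem_nhdsWithin_of_mem_nhds hU) self_mem_nhdsWithin)
  have hFU : {z}ᶜ ⊆ F * (U ∩ {z}ᶜ) := fun x hx ↦
    let ⟨f, hf, u, hu, hxfu⟩ := hcover x hx
    mem_mul.mpr ⟨f, hf, u, hu, hxfu.symm⟩
  have hFinv : ∀ f ∈ F, ∃ g, ∀ u ∈ U ∩ {z}ᶜ, g * f * u = u := fun f hf ↦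
    (hinv f (hFz hf)).imp fun g hgf u hu ↦ by rw [hgf, hone u hu.2]
  rw [isOpen_singleton_iff_punctured_nhds, ← notMem_closure_iff_nhdsWithin_eq_bot]
  exact fun hzc ↦ notMem_closure_mul_of_finite hF hz hcont hFinv
    (fun h ↦ hzU (closure_mono inter_subset_left h)) (closure_mono hFU hzc)

end RightZero

/-- If `S` is a Hausdorff space with an associative multiplication with
continuous left translations, `z` is a right zero, `G = S \ {z}` is a subgroup, and `G`
is left precompact in the subspace topology, then `z` is an isolated point of `S`. -/
theorem stmt_0 {S : Type*} [TopologicalSpace S] [T2Space S]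
    (mul : S → S → S)
    (assoc : ∀ a b c : S, mul (mul a b) c = mul a (mul b c))
    (contL : ∀ a : S, Continuous fun x => mul a x)
    (z : S) (hz : ∀ x : S, mul x z = z)
    (G : Set S) (hG : G = {x : S | x ≠ z})
    (hGmul : ∀ x ∈ G, ∀ y ∈ G, mul x y ∈ G)
    (e : S) (he : e ∈ G)
    (hidl : ∀ x ∈ G, mul e x = x) (hidr : ∀ x ∈ G, mul x e = x)
    (hinv : ∀ x ∈ G, ∃ y ∈ G, mul x y = e ∧ mul y x = e)
    (hpre : ∀ U : Set S, U ⊆ G → U ∈ nhdsWithin e G →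
      ∃ F : Set S, F ⊆ G ∧ F.Finite ∧ ∀ g ∈ G, ∃ f ∈ F, ∃ u ∈ U, g = mul f u) :
    IsOpen ({z} : Set S) := by
  subst hG
  let : Semigroup S := { mul, mul_assoc := assoc }
  exact stmt_0_general (fun a ↦ (contL a).continuousAt) hz (disjoint_nhds_nhds.mpr he) hidl
    (fun x hx ↦ (hinv x hx).imp fun _ hy ↦ hy.2.2) hpre
end

section
/- Let S be a Hausdorff topological space with an associative multiplication such that for every a ∈ S the left translation x ↦ a·x is continuous. Suppose 0 ∈ S satisfies x·0 = 0 for all x ∈ S, the set G = S ∖ {0} is closed under multiplication, and G is a group under the induced multiplication. If the multiplication of G, with the subspace topology, is jointly continuous (so G is a paratopological group) and G is pseudocompact, then 0 is an isolated point of S. -/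
/-- A topological space is pseudocompact if every locally finite family of non-empty
open subsets is finite. -/
def IsPseudocompact (X : Type*) [TopologicalSpace X] : Prop :=
  ∀ 𝒰 : Set (Set X), (∀ U ∈ 𝒰, IsOpen U ∧ U.Nonempty) →
    LocallyFinite (fun U : 𝒰 => (U : Set X)) → 𝒰.Finite

/-!
The group `G` acts on `S` by left translations, `z` is a fixed point of this action and `G` is the
orbit of `e`. If `z` were not isolated, it would lie in the closure of that orbit. Separate `z` and
`e` by disjoint open sets `A` and `B`. Every finite intersection of translates of `A` is a
neighbourhood of `z` and meets the orbit, which gives a sequence `x` in `G` with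
`(x n)⁻¹ * x m * e ∈ A` for `n < m`. On the other hand, pseudocompactness makes `G` precompact up
to closures: for some `n < m` the element `(x n)⁻¹ * x m` lies in the closure of the set of all `g`
with `g * e ∈ B`, which is disjoint from `A`.

Inversion is not known to be continuous on `G`. Precompactness uses the substitute that `u⁻¹` lies
in the closure of a given neighbourhood of `1` once `u` is close enough to `1`. This is proved by
Pfister's method: a sequence `x` of counterexamples tending to `1` fast enough has partial products
`x 0 * ⋯ * x n` which, thickened to open sets, cannot accumulate.
-/

open Filter Topology MulAction
open scoped Pointwise

namespace IsPseudocompact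

variable {X : Type*} [TopologicalSpace X]

lemma finite_of_locallyFinite {ι : Type*} {U : ι → Set X} (hX : IsPseudocompact X)
    (hUo : ∀ i, IsOpen (U i)) (hUne : ∀ i, (U i).Nonempty) (hU : LocallyFinite U) :
    Finite ι := by
  have hrange : (Set.range U).Finite :=
    hX _ (Set.forall_mem_range.2 fun i => ⟨hUo i, hUne i⟩) hU.on_range
  -- A set occurring infinitely often would violate local finiteness at any of its points.
  have hfiber : ∀ s ∈ Set.range U, (U ⁻¹' {s}).Finite := by
    rintro _ ⟨i, rfl⟩
    obtain ⟨x, hx⟩ := hUne i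
    exact (hU.point_finite x).subset fun j (hj : U j = U i) => hj.ge hx
  simpa only [Set.preimage_range, Set.finite_univ_iff] using hrange.preimage' hfiber

lemma exists_forall_nhds_frequently_inter_nonempty {U : ℕ → Set X} (hX : IsPseudocompact X)
    (hUo : ∀ n, IsOpen (U n)) (hUne : ∀ n, (U n).Nonempty) :
    ∃ x, ∀ N ∈ 𝓝 x, ∃ᶠ n in atTop, (U n ∩ N).Nonempty := by
  by_contra! hU
  have hlf : LocallyFinite U := fun x => by
    obtain ⟨N, hN, hUN⟩ := hU x
    rw [← Nat.cofinite_eq_atTop, eventually_cofinite] at hUN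
    exact ⟨N, hN, by simpa only [← Set.nonempty_iff_ne_empty] using hUN⟩
  exact not_finite_iff_infinite.2 inferInstance (hX.finite_of_locallyFinite hUo hUne hlf)

end IsPseudocompact

lemma exists_seq_isOpen_mul_subset {M : Type*} [Monoid M] [TopologicalSpace M] [ContinuousMul M]
    {W : Set M} (hW : W ∈ 𝓝 1) :
    ∃ V : ℕ → Set M, V 0 ⊆ W ∧ (∀ n, IsOpen (V n)) ∧ (∀ n, 1 ∈ V n) ∧
      ∀ n, V (n + 1) * V (n + 1) ⊆ V n := by
  obtain ⟨V₀, hV₀W, hV₀⟩ := mem_nhds_iff.1 hW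
  choose! next next_open one_mem_next next_mul using
    fun (U : Set M) (hU : U ∈ 𝓝 1) => exists_open_nhds_one_mul_subset hU
  let V : ℕ → Set M := fun n => next^[n] V₀
  have V_succ (n : ℕ) : V (n + 1) = next (V n) := Function.iterate_succ_apply' next n V₀
  have hV (n : ℕ) : IsOpen (V n) ∧ 1 ∈ V n := by
    induction n with
    | zero => exact hV₀
    | succ n ih =>
      have hVn : V n ∈ 𝓝 1 := ih.1.mem_nhds ih.2
      exact V_succ n ▸ ⟨next_open _ hVn, one_mem_next _ hVn⟩
  exact ⟨V, hV₀W, fun n => (hV n).1, fun n => (hV n).2,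
    fun n => V_succ n ▸ next_mul _ ((hV n).1.mem_nhds (hV n).2)⟩

lemma antitone_smul_of_mul_subset {G : Type*} [Group G] {V : ℕ → Set G} {y : ℕ → G}
    (hV : ∀ n, V (n + 1) * V (n + 1) ⊆ V n) (hy : ∀ n, (y n)⁻¹ * y (n + 1) ∈ V (n + 1)) :
    Antitone fun n => y n • V n := by
  refine antitone_nat_of_succ_le fun n => ?_
  rintro _ ⟨v, hv, rfl⟩
  have hmem : (y n)⁻¹ * y (n + 1) * v ∈ V n := hV n (Set.mul_mem_mul (hy n) hv)
  exact Set.mem_smul_set_iff_inv_smul_mem.2 (by simpa only [smul_eq_mul, mul_assoc] using hmem)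

section ParatopologicalGroup

variable {G : Type*} [Group G] [TopologicalSpace G] [ContinuousMul G]

lemma IsPseudocompact.exists_inv_mul_mem_closure {V : ℕ → Set G} {y : ℕ → G}
    (hG : IsPseudocompact G) (hVo : ∀ n, IsOpen (V n)) (hV1 : ∀ n, 1 ∈ V n)
    (hV : ∀ n, V (n + 1) * V (n + 1) ⊆ V n) (hy : ∀ n, (y n)⁻¹ * y (n + 1) ∈ V (n + 1)) :
    ∃ n, (y (n + 1))⁻¹ * y n ∈ closure (V 0) := by
  by_contra! hcon
  have hV_anti : Antitone V := antitone_nat_of_succ_le fun n =>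
    (Set.subset_mul_left _ (hV1 (n + 1))).trans (hV n)
  let O : ℕ → Set G := fun n => y n • V n \ y (n + 1) • closure (V 0)
  have hOo (n : ℕ) : IsOpen (O n) := ((hVo n).smul _).sdiff (isClosed_closure.smul _)
  have hOne (n : ℕ) : (O n).Nonempty :=
    ⟨y n, by simpa [Set.mem_smul_set_iff_inv_smul_mem] using hV1 n,
      by simpa [Set.mem_smul_set_iff_inv_smul_mem] using hcon n⟩
  obtain ⟨g, hg⟩ := hG.exists_forall_nhds_frequently_inter_nonempty hOo hOne
  have hg_closure (n : ℕ) : g ∈ closure (y n • V n) := mem_closure_iff_nhds'.2 fun N hN => by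
    obtain ⟨m, hnm, p, hpO, hpN⟩ := frequently_atTop.1 (hg N hN) n
    exact ⟨⟨p, antitone_smul_of_mul_subset hV hy hnm hpO.1⟩, hpN⟩
  obtain ⟨n, _, ⟨-, hpO⟩, v, hv, rfl⟩ :=
    (hg (g • V 1) (smul_mem_nhds_self.2 ((hVo 1).mem_nhds (hV1 1)))).exists
  refine hpO ?_
  rw [← closure_smul]
  refine map_mem_closure (f := (· * v)) (by fun_prop) (hg_closure (n + 1)) ?_
  rintro _ ⟨w, hw, rfl⟩
  have hwv : w * v ∈ V 0 := hV 0 (Set.mul_mem_mul (hV_anti (Nat.le_add_left 1 n) hw) hv)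
  exact ⟨w * v, hwv, (mul_assoc _ _ _).symm⟩

lemma IsPseudocompact.eventually_inv_mem_closure (hG : IsPseudocompact G) {W : Set G}
    (hW : W ∈ 𝓝 1) : ∀ᶠ u in 𝓝 (1 : G), u⁻¹ ∈ closure W := by
  by_contra hcon
  obtain ⟨V, hVW, hVo, hV1, hV⟩ := exists_seq_isOpen_mul_subset hW
  have hx (n : ℕ) : ∃ u, u⁻¹ ∉ closure W ∧ u ∈ V (n + 1) :=
    ((not_eventually.1 hcon).and_eventually ((hVo (n + 1)).mem_nhds (hV1 (n + 1)))).exists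
  choose x hx_inv hxV using hx
  let y : ℕ → G := fun n => ((List.range n).map x).prod
  have hy (n : ℕ) : y (n + 1) = y n * x n := List.prod_range_succ x n
  obtain ⟨n, hn⟩ := hG.exists_inv_mul_mem_closure (y := y) hVo hV1 hV fun n => by
    simpa only [hy, inv_mul_cancel_left] using hxV n
  exact hx_inv n (closure_mono hVW (by simpa [hy] using hn))

lemma IsPseudocompact.exists_lt_inv_mul_mem_closure (hG : IsPseudocompact G) (x : ℕ → G)
    {W : Set G} (hW : W ∈ 𝓝 1) : ∃ n m, n < m ∧ (x n)⁻¹ * x m ∈ closure W := by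
  obtain ⟨W', hW', hW'_mul⟩ := exists_nhds_one_split4 hW
  obtain ⟨U, hU, hUo, hU1⟩ :=
    mem_nhds_iff.1 (inter_mem hW' (hG.eventually_inv_mem_closure hW'))
  obtain ⟨g, hg⟩ := hG.exists_forall_nhds_frequently_inter_nonempty
    (fun n => hUo.smul (x n)) (fun n => ⟨x n • 1, 1, hU1, rfl⟩)
  have hgU := hg (g • U) (smul_mem_nhds_self.2 (hUo.mem_nhds hU1))
  obtain ⟨n, _, ⟨u, hu, rfl⟩, u', hu', hn⟩ := hgU.exists
  obtain ⟨m, hnm, _, ⟨v, hv, rfl⟩, v', hv', hm⟩ := frequently_atTop'.1 hgU n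
  refine ⟨n, m, hnm, ?_⟩
  simp only [smul_eq_mul] at hn hm
  have hprod : (x n)⁻¹ * x m = u * u'⁻¹ * v' * v⁻¹ := by
    rw [eq_mul_inv_of_mul_eq hn.symm, eq_mul_inv_of_mul_eq hm.symm]
    group
  rw [hprod]
  exact map_mem_closure₂ (f := fun a b => u * a * v' * b) (by fun_prop) (hU hu').2 (hU hv).2
    fun a ha b hb => hW'_mul (hU hu).1 ha (hU hv').1 hb

theorem IsPseudocompact.notMem_closure_orbit {X : Type*} [TopologicalSpace X] [T2Space X]
    [MulAction G X] [ContinuousConstSMul G X] (hG : IsPseudocompact G) {x z : X}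
    (hx : Continuous fun g : G => g • x) (hz : z ∈ fixedPoints G X) (hzx : z ≠ x) :
    z ∉ closure (orbit G x) := by
  intro hz_closure
  obtain ⟨A, B, hAo, hBo, hzA, hxB, hAB⟩ := t2_separation hzx
  have hseq (s : Finset G) : ∃ g : G, ∀ a ∈ s, (a⁻¹ * g) • x ∈ A := by
    have hA : ∀ᶠ y in 𝓝 z, ∀ a ∈ s, a⁻¹ • y ∈ A := (eventually_all_finset s).2 fun a _ =>
      (continuous_const_smul a⁻¹).tendsto' z z (hz a⁻¹) (hAo.mem_nhds hzA)
    obtain ⟨_, ⟨g, rfl⟩, hg⟩ := ((mem_closure_iff_frequently.1 hz_closure).and_eventually hA).exists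
    exact ⟨g, fun a ha => mul_smul a⁻¹ g x ▸ hg a ha⟩
  obtain ⟨g, -, hgA⟩ := exists_seq_of_forall_finset_exists (fun _ : G => True)
    (fun a b => (a⁻¹ * b) • x ∈ A) fun s _ => (hseq s).imp fun _ hg => ⟨trivial, hg⟩
  have hB : (fun h : G => h • x) ⁻¹' B ∈ 𝓝 1 :=
    (hBo.preimage hx).mem_nhds (by simpa using hxB)
  obtain ⟨n, m, hnm, hmem⟩ := hG.exists_lt_inv_mul_mem_closure g hB
  exact Set.disjoint_left.1 ((hAB.preimage _).closure_right (hAo.preimage hx)) (hgA n m hnm) hmem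

end ParatopologicalGroup

/-- If `S` is a Hausdorff space with an associative multiplication with
continuous left translations, `z` is a right zero, `G = S \ {z}` is a subgroup whose
multiplication is jointly continuous in the subspace topology (a paratopological group)
and which is pseudocompact, then `z` is an isolated point of `S`. -/
theorem stmt_1 {S : Type*} [TopologicalSpace S] [T2Space S]
    (mul : S → S → S)
    (assoc : ∀ a b c : S, mul (mul a b) c = mul a (mul b c))
    (contL : ∀ a : S, Continuous fun x => mul a x)
    (z : S) (hz : ∀ x : S, mul x z = z)
    (G : Set S) (hG : G = {x : S | x ≠ z})
    (hGmul : ∀ x ∈ G, ∀ y ∈ G, mul x y ∈ G)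
    (e : S) (he : e ∈ G)
    (hidl : ∀ x ∈ G, mul e x = x) (hidr : ∀ x ∈ G, mul x e = x)
    (hinv : ∀ x ∈ G, ∃ y ∈ G, mul x y = e ∧ mul y x = e)
    (hjoint : Continuous fun p : G × G => mul (p.1 : S) (p.2 : S))
    (hpc : IsPseudocompact ↥G) :
    IsOpen ({z} : Set S) := by
  have mem_G (x : S) : x ∈ G ↔ x ≠ z := by rw [hG]; rfl
  choose inv inv_mem _ inv_mul using hinv
  let _ : Group G :=
    { mul := fun a b => ⟨mul a b, hGmul _ a.2 _ b.2⟩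
      one := ⟨e, he⟩
      inv := fun a => ⟨inv a a.2, inv_mem _ _⟩
      mul_assoc := fun a b c => Subtype.ext (assoc _ _ _)
      one_mul := fun a => Subtype.ext (hidl _ a.2)
      mul_one := fun a => Subtype.ext (hidr _ a.2)
      inv_mul_cancel := fun a => Subtype.ext (inv_mul _ a.2) }
  have _ : ContinuousMul G := ⟨hjoint.subtype_mk _⟩
  let _ : MulAction G S :=
    { smul := fun a s => mul a s
      one_smul := fun s =>
        (eq_or_ne s z).elim (fun hs => hs ▸ hz e) fun hs => hidl s ((mem_G s).2 hs)
      mul_smul := fun a b s => assoc a b s }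
  have _ : ContinuousConstSMul G S := ⟨fun a => contL a⟩
  have smul_e (a : G) : a • e = a := hidr a a.2
  have hz_closure : z ∉ closure (orbit G e) :=
    hpc.notMem_closure_orbit (by simpa only [smul_e] using continuous_subtype_val)
      (fun a => hz a) ((mem_G e).1 he).symm
  have horbit : orbit G e = {z}ᶜ := by
    simp only [orbit, smul_e, Subtype.range_coe, hG, Set.compl_singleton_eq]
  rw [horbit, notMem_closure_iff_nhdsWithin_eq_bot] at hz_closure
  exact (isOpen_singleton_iff_punctured_nhds z).2 hz_closure
end

section
/- Let S be a Hausdorff topological space with an associative multiplication such that for every a ∈ S the left translation x ↦ a·x is continuous. Suppose 0 ∈ S satisfies x·0 = 0 for all x ∈ S, the set G = S ∖ {0} is closed under multiplication, and G is a group under the induced multiplication. If G, with the subspace topology, is left ω-precompact and pseudocompact, then 0 is an isolated point of S. -/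
open Set
open scoped Topology

section Pseudocompact

variable {X Y : Type*} [TopologicalSpace X] [TopologicalSpace Y]

theorem IsPseudocompact.finite_of_locallyFinite_s2 {ι : Type*} (hX : IsPseudocompact X)
    {u : ι → Set X} (hlf : LocallyFinite u) (hopen : ∀ i, IsOpen (u i))
    (hne : ∀ i, (u i).Nonempty) : Finite ι := by
  have hrange : (range u).Finite :=
    hX _ (forall_mem_range.2 fun i => ⟨hopen i, hne i⟩) hlf.on_range
  have hfiber : ∀ A ∈ range u, (u ⁻¹' {A}).Finite := by
    rintro _ ⟨j, rfl⟩
    obtain ⟨x, hx⟩ := hne j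
    exact (hlf.point_finite x).subset fun i hi => hi.symm.subset hx
  exact finite_univ_iff.1 (preimage_range u ▸ hrange.preimage' hfiber)

theorem IsPseudocompact.nonempty_iInter_closure_of_antitone (hX : IsPseudocompact X)
    {u : ℕ → Set X} (hanti : Antitone u) (hopen : ∀ n, IsOpen (u n))
    (hne : ∀ n, (u n).Nonempty) : (⋂ n, closure (u n)).Nonempty := by
  by_contra hempty
  have hlf : LocallyFinite u := fun x => by
    obtain ⟨n, hn⟩ : ∃ n, x ∉ closure (u n) :=
      not_forall.1 fun hx => hempty ⟨x, mem_iInter.2 hx⟩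
    refine ⟨(closure (u n))ᶜ, isClosed_closure.isOpen_compl.mem_nhds hn,
      (finite_Iio n).subset ?_⟩
    rintro m ⟨y, hym, hyn⟩
    exact not_le.1 fun hnm => hyn (subset_closure (hanti hnm hym))
  exact (hX.finite_of_locallyFinite_s2 hlf hopen hne).false

theorem isOpen_singleton_of_iInter_closure_subset {z : X} (hz : IsPseudocompact ↥({z}ᶜ : Set X))
    {V : ℕ → Set X} (hopen : ∀ n, IsOpen (V n)) (hmem : ∀ n, z ∈ V n)
    (hinter : ⋂ n, closure (V n) ⊆ {z}) : IsOpen ({z} : Set X) := by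
  by_contra hisolated
  have : (𝓝[≠] z).NeBot := ⟨mt (isOpen_singleton_iff_punctured_nhds z).2 hisolated⟩
  let W (n : ℕ) : Set ↥({z}ᶜ : Set X) := Subtype.val ⁻¹' dissipate V n
  have hdissipate (n : ℕ) : IsOpen (dissipate V n) :=
    (finite_Iic n).isOpen_biInter fun k _ => hopen k
  have hWne (n : ℕ) : (W n).Nonempty := by
    have hzn : dissipate V n ∈ 𝓝 z :=
      (hdissipate n).mem_nhds (mem_dissipate.2 fun k _ => hmem k)
    obtain ⟨x, hxz, hxn⟩ := Filter.nonempty_of_mem (inter_mem_nhdsWithin {z}ᶜ hzn)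
    exact ⟨⟨x, hxz⟩, hxn⟩
  obtain ⟨x, hx⟩ := hz.nonempty_iInter_closure_of_antitone (u := W)
    (fun _ _ hmn => preimage_mono (antitone_dissipate hmn))
    (fun n => (hdissipate n).preimage continuous_subtype_val) hWne
  refine x.2 (hinter (mem_iInter.2 fun n => ?_))
  exact closure_mono (dissipate_subset le_rfl)
    (continuous_subtype_val.closure_preimage_subset _ (mem_iInter.1 hx n))

theorem isOpen_singleton_of_forall_exists_map_mem {z : X}
    (hz : IsPseudocompact ↥({z}ᶜ : Set X)) {f : ℕ → X → Y} (hf : ∀ n, Continuous (f n))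
    {U : Set Y} (hU : IsOpen U) (hfz : ∀ n, f n z ∉ closure U)
    (hfU : ∀ x ≠ z, ∃ n, f n x ∈ U) : IsOpen ({z} : Set X) := by
  refine isOpen_singleton_of_iInter_closure_subset hz (V := fun n => f n ⁻¹' (closure U)ᶜ)
    (fun n => isClosed_closure.isOpen_compl.preimage (hf n)) hfz fun x hx => ?_
  by_contra hxz
  obtain ⟨n, hn⟩ := hfU x hxz
  have hdisj : Disjoint (f n ⁻¹' (closure U)ᶜ) (f n ⁻¹' U) :=
    (disjoint_compl_left_iff_subset.2 subset_closure).preimage _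
  exact (hdisj.closure_left (hU.preimage (hf n))).notMem_of_mem_left (mem_iInter.1 hx n) hn

end Pseudocompact

theorem exists_seq_forall_exists_mul_mem {S : Type*} {mul : S → S → S}
    (assoc : ∀ a b c : S, mul (mul a b) c = mul a (mul b c)) {G U C : Set S} {e : S}
    (hG : G.Nonempty) (hid : ∀ x ∈ U, mul e x = x) (hinv : ∀ x ∈ C, ∃ y, mul y x = e)
    (hC : C.Countable) (hcover : ∀ g ∈ G, ∃ c ∈ C, ∃ u ∈ U, g = mul c u) :
    ∃ d : ℕ → S, ∀ g ∈ G, ∃ n, mul (d n) g ∈ U := by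
  have hCne : C.Nonempty := hG.elim fun g hg => (hcover g hg).imp fun _ hc => hc.1
  obtain ⟨c, rfl⟩ := hC.exists_eq_range hCne
  choose d hd using fun n => hinv (c n) (mem_range_self n)
  refine ⟨d, fun g hg => ?_⟩
  obtain ⟨_, ⟨n, rfl⟩, u, hu, rfl⟩ := hcover g hg
  refine ⟨n, ?_⟩
  rwa [← assoc, hd, hid u hu]

theorem stmt_2_general {S : Type*} [TopologicalSpace S] (mul : S → S → S)
    (assoc : ∀ a b c : S, mul (mul a b) c = mul a (mul b c))
    (contL : ∀ a : S, Continuous fun x => mul a x)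
    (z : S) (hz : ∀ x : S, mul x z = z)
    (e : S) (hsep : Disjoint (𝓝 e) (𝓝 z))
    (hidl : ∀ x ≠ z, mul e x = x) (hinv : ∀ x ≠ z, ∃ y, mul y x = e)
    (hpre : ∀ U : Set S, U ⊆ {z}ᶜ → U ∈ 𝓝[{z}ᶜ] e →
      ∃ C : Set S, C ⊆ {z}ᶜ ∧ C.Countable ∧ ∀ g ≠ z, ∃ c ∈ C, ∃ u ∈ U, g = mul c u)
    (hpc : IsPseudocompact ↥({z}ᶜ : Set S)) :
    IsOpen ({z} : Set S) := by
  obtain ⟨U, ⟨heU, hU⟩, V, ⟨hzV, hV⟩, hUV⟩ :=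
    ((nhds_basis_opens e).disjoint_iff (nhds_basis_opens z)).1 hsep
  have hzU : z ∉ closure U := (hUV.closure_left hV).notMem_of_mem_right hzV
  have hUz : U ⊆ {z}ᶜ := subset_compl_singleton_iff.2 fun h => hzU (subset_closure h)
  obtain ⟨C, hCz, hC, hcover⟩ := hpre U hUz (mem_nhdsWithin_of_mem_nhds (hU.mem_nhds heU))
  obtain ⟨d, hd⟩ := exists_seq_forall_exists_mul_mem assoc ⟨e, hUz heU⟩
    (fun x hx => hidl x (hUz hx)) (fun x hx => hinv x (hCz hx)) hC hcover
  exact isOpen_singleton_of_forall_exists_map_mem hpc (fun n => contL (d n)) hU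
    (fun n => (hz (d n)).symm ▸ hzU) hd

/-- If `S` is a Hausdorff space with an associative multiplication with
continuous left translations, `z` is a right zero, `G = S \ {z}` is a subgroup which,
in the subspace topology, is left ω-precompact and pseudocompact, then `z` is an
isolated point of `S`. -/
theorem stmt_2 {S : Type*} [TopologicalSpace S] [T2Space S]
    (mul : S → S → S)
    (assoc : ∀ a b c : S, mul (mul a b) c = mul a (mul b c))
    (contL : ∀ a : S, Continuous fun x => mul a x)
    (z : S) (hz : ∀ x : S, mul x z = z)
    (G : Set S) (hG : G = {x : S | x ≠ z})
    (hGmul : ∀ x ∈ G, ∀ y ∈ G, mul x y ∈ G)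
    (e : S) (he : e ∈ G)
    (hidl : ∀ x ∈ G, mul e x = x) (hidr : ∀ x ∈ G, mul x e = x)
    (hinv : ∀ x ∈ G, ∃ y ∈ G, mul x y = e ∧ mul y x = e)
    (hpre : ∀ U : Set S, U ⊆ G → U ∈ nhdsWithin e G →
      ∃ C : Set S, C ⊆ G ∧ C.Countable ∧ ∀ g ∈ G, ∃ c ∈ C, ∃ u ∈ U, g = mul c u)
    (hpc : IsPseudocompact ↥G) :
    IsOpen ({z} : Set S) := by
  subst hG
  exact stmt_2_general mul assoc contL z hz e (disjoint_nhds_nhds.2 he) hidl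
    (fun x hx => (hinv x hx).imp fun _ hy => hy.2.2) hpre hpc
end

section
/- Let S be a Hausdorff topological space with a jointly continuous associative multiplication (a topological semigroup). Suppose 0 ∈ S satisfies x·0 = 0 for all x ∈ S, the set G = S ∖ {0} is closed under multiplication, and G is a group under the induced multiplication. If for every neighborhood U ⊆ G of the identity of G (in the subspace topology) there exists a finite set F ⊆ G with G = F·U⁻¹·U (where U⁻¹ = {u⁻¹ : u ∈ U}), then 0 is an isolated point of S. -/
/-! Let a group `G` act continuously on a Hausdorff space, fixing `z`, and let `x ≠ z`. By
continuity there are neighbourhoods `U` of `1` in `G` and `B` of `z` with `U • B` disjoint from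
`U • x`. Suppose `G = F * U⁻¹ * U` with `F` finite. Writing `g = f * u⁻¹ * v` gives
`u • f⁻¹ • g • x = v • x`, so `f⁻¹ • g • x ∉ B`. Thus the orbit of `x` avoids the finite
intersection of the sets `f • B`, a neighbourhood of `z` because `z` is fixed. For a group `G`
inside a semigroup `S`, acting on `S` by left multiplication, the orbit of the identity is `G`. The
identity of `G` need not be a left identity of `S`, so this is only a `SemigroupAction`. -/

section SemigroupAction

open Filter Topology
open scoped Pointwise

theorem exists_nhds_nhds_forall_smul_ne_smul {M X : Type*} [TopologicalSpace M] [TopologicalSpace X]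
    [T2Space X] [SMul M X] [ContinuousSMul M X] {a : M} {x y : X} (h : a • y ≠ a • x) :
    ∃ U ∈ 𝓝 a, ∃ B ∈ 𝓝 y, ∀ u ∈ U, ∀ v ∈ U, ∀ b ∈ B, u • b ≠ v • x := by
  have hleft : ContinuousAt (fun p : (M × M) × X => p.1.1 • p.2) ((a, a), y) := by fun_prop
  have hright : ContinuousAt (fun p : (M × M) × X => p.1.2 • x) ((a, a), y) := by fun_prop
  have hne : ∀ᶠ p : (M × M) × X in 𝓝 ((a, a), y), p.1.1 • p.2 ≠ p.1.2 • x :=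
    (hleft.ne_iff_eventually_ne hright).1 h
  obtain ⟨P, hP, B, hB, hPB⟩ := mem_nhds_prod_iff.1 hne
  rw [nhds_prod_eq] at hP
  obtain ⟨U, hU, hUP⟩ := mem_prod_self_iff.1 hP
  exact ⟨U, hU, B, hB, fun u hu v hv b hb =>
    hPB (Set.mk_mem_prod (hUP (Set.mk_mem_prod hu hv)) hb)⟩

variable {G X : Type*} [Group G] [SemigroupAction G X]

theorem exists_inv_smul_smul_notMem {F U : Set G} (hFU : F * U⁻¹ * U = Set.univ) {B : Set X} {x : X}
    (hUB : ∀ u ∈ U, ∀ v ∈ U, ∀ y ∈ B, u • y ≠ v • x) (g : G) : ∃ f ∈ F, f⁻¹ • g • x ∉ B := by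
  obtain ⟨_, ⟨f, hf, u, hu, rfl⟩, v, hv, rfl⟩ : g ∈ F * U⁻¹ * U := hFU ▸ Set.mem_univ g
  refine ⟨f, hf, fun hB => hUB u⁻¹ hu v hv _ hB ?_⟩
  simp only [← mul_smul]
  group

variable [TopologicalSpace G] [TopologicalSpace X] [ContinuousSMul G X] [T2Space X]

theorem notMem_closure_range_smul {x z : X} (hz : ∀ g : G, g • z = z) (hx : (1 : G) • x ≠ z)
    (hG : ∀ U ∈ 𝓝 (1 : G), ∃ F : Set G, F.Finite ∧ F * U⁻¹ * U = Set.univ) :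
    z ∉ closure (Set.range fun g : G => g • x) := by
  obtain ⟨U, hU, B, hB, hUB⟩ :=
    exists_nhds_nhds_forall_smul_ne_smul ((hz 1).trans_ne hx.symm)
  obtain ⟨F, hF, hFU⟩ := hG U hU
  have hN : ∀ᶠ y in 𝓝 z, ∀ f ∈ F, f⁻¹ • y ∈ B := by
    refine (eventually_all_finite hF).2 fun f _ => ?_
    have hf : Tendsto (fun y : X => f⁻¹ • y) (𝓝 z) (𝓝 z) := by
      simpa only [hz] using (continuous_const_smul f⁻¹).tendsto z
    exact hf hB
  rw [mem_closure_iff_frequently, not_frequently]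
  filter_upwards [hN]
  rintro _ hy ⟨g, rfl⟩
  obtain ⟨f, hf, hfB⟩ := exists_inv_smul_smul_notMem hFU hUB g
  exact hfB (hy f hf)

end SemigroupAction

theorem stmt_4_general {S : Type*} [TopologicalSpace S] [T2Space S]
    (mul : S → S → S)
    (assoc : ∀ a b c : S, mul (mul a b) c = mul a (mul b c))
    (contMul : Continuous fun p : S × S => mul p.1 p.2)
    (G : Set S) (z : S) (hzG : z ∉ G) (hz : ∀ x ∈ G, mul x z = z)
    (hGmul : ∀ x ∈ G, ∀ y ∈ G, mul x y ∈ G)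
    (e : S) (he : e ∈ G) (hidl : ∀ x ∈ G, mul e x = x)
    (inv : S → S) (hinv : ∀ x ∈ G, inv x ∈ G ∧ mul (inv x) x = e)
    (hpre : ∀ U : Set S, U ⊆ G → U ∈ nhdsWithin e G →
      ∃ F : Set S, F ⊆ G ∧ F.Finite ∧
        ∀ g ∈ G, ∃ f ∈ F, ∃ u ∈ U, ∃ v ∈ U, g = mul f (mul (inv u) v)) :
    z ∉ closure G := by
  let _ : Mul G := ⟨fun g h => ⟨mul g h, hGmul g g.2 h h.2⟩⟩
  let _ : One G := ⟨⟨e, he⟩⟩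
  let _ : Inv G := ⟨fun g => ⟨inv g, (hinv g g.2).1⟩⟩
  let _ : Group G := Group.ofLeftAxioms (fun a b c => Subtype.ext (assoc a b c))
    (fun g => Subtype.ext (hidl g g.2)) (fun g => Subtype.ext (hinv g g.2).2)
  let _ : SemigroupAction G S := { smul g x := mul g x, mul_smul g h x := assoc g h x }
  have : ContinuousSMul G S :=
    ⟨contMul.comp ((continuous_subtype_val.comp continuous_fst).prodMk continuous_snd)⟩
  have hone_smul : (1 : G) • e = e := hidl e he
  have hrange : Set.range (fun g : G => g • e) = G := by
    have hsmul (g : G) : g • e = g := congrArg Subtype.val (mul_one g)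
    simp only [hsmul, Subtype.range_coe]
  rw [← hrange]
  refine notMem_closure_range_smul (fun g : G => hz g g.2)
    (hone_smul.trans_ne (ne_of_mem_of_not_mem he hzG)) fun U hU => ?_
  obtain ⟨F, hFG, hF, hFU⟩ := hpre (Subtype.val '' U) (Subtype.coe_image_subset G U)
    (mem_nhds_subtype_iff_nhdsWithin.1 hU)
  refine ⟨Subtype.val ⁻¹' F, hF.preimage Subtype.val_injective.injOn, Set.eq_univ_of_forall ?_⟩
  intro g
  obtain ⟨f, hf, _, ⟨u, hu, rfl⟩, _, ⟨v, hv, rfl⟩, hg⟩ := hFU g g.2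
  have hg : g = ⟨f, hFG hf⟩ * u⁻¹ * v := by
    rw [mul_assoc]
    exact Subtype.ext hg
  rw [hg]
  exact Set.mul_mem_mul (Set.mul_mem_mul hf (Set.inv_mem_inv.2 hu)) hv

/-- Let `S` be a Hausdorff topological semigroup, `z` a right zero,
`G = S \ {z}` a subgroup with inversion `inv`. If for every neighbourhood `U ⊆ G` of
the identity of `G` (in the subspace topology) there is a finite set `F ⊆ G` with
`G = F·U⁻¹·U`, then `z` is an isolated point of `S`. -/
theorem stmt_4 {S : Type*} [TopologicalSpace S] [T2Space S]
    (mul : S → S → S)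
    (assoc : ∀ a b c : S, mul (mul a b) c = mul a (mul b c))
    (contMul : Continuous fun p : S × S => mul p.1 p.2)
    (z : S) (hz : ∀ x : S, mul x z = z)
    (G : Set S) (hG : G = {x : S | x ≠ z})
    (hGmul : ∀ x ∈ G, ∀ y ∈ G, mul x y ∈ G)
    (e : S) (he : e ∈ G)
    (hidl : ∀ x ∈ G, mul e x = x) (hidr : ∀ x ∈ G, mul x e = x)
    (inv : S → S)
    (hinv : ∀ x ∈ G, inv x ∈ G ∧ mul x (inv x) = e ∧ mul (inv x) x = e)
    (hpre : ∀ U : Set S, U ⊆ G → U ∈ nhdsWithin e G →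
      ∃ F : Set S, F ⊆ G ∧ F.Finite ∧
        ∀ g ∈ G, ∃ f ∈ F, ∃ u ∈ U, ∃ v ∈ U, g = mul f (mul (inv u) v)) :
    IsOpen ({z} : Set S) := by
  subst hG
  rw [isOpen_singleton_iff_punctured_nhds, ← notMem_closure_iff_nhdsWithin_eq_bot]
  exact stmt_4_general mul assoc contMul _ z (fun hzz => hzz rfl) (fun x _ => hz x) hGmul e he hidl
    inv (fun x hx => ⟨(hinv x hx).1, (hinv x hx).2.2⟩) hpre
end

section
/- Let {S_i}_{i∈I} be a family of monoids each having a zero 0_{S_i} with identity 1_{S_i} ≠ 0_{S_i}, let {Λ_i}_{i∈I} be nonempty index sets, and let S = ∑_{i∈I} B⁰_{Λ_i}(S_i) be the orthogonal sum of the Brandt Λ_i⁰-extensions, equipped with a Hausdorff topology for which the multiplication of S is separately continuous. Then for every non-zero element (α,g,β) ∈ (S_i)*_{α,β} ⊆ S there exists an open neighborhood U of (α,g,β) in S with U ⊆ (S_i)*_{α,β}; consequently every set (S_i)*_{α,β} is open in S. -/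
/-! If `e * g ≠ 0` and `g * f ≠ 0` in `S i`, then `(α, g, β)` is annihilated neither by left
multiplication by `(α, e, α)` nor by right multiplication by `(β, f, β)`. An element which the
first does not annihilate lies in the summand of `i` and has row index `α`; one which the second
does not annihilate has column index `β`. As `{0}` is closed and translations are continuous, the
elements surviving both form an open neighbourhood of `(α, g, β)` inside `(S_i)*_{α,β}`. In a
monoid, `e = f = 1` serves every `g ≠ 0`. -/

/-- The underlying set of the orthogonal sum `∑_{i∈I} B⁰_{Λ i}(S i)` of the Brandt
`Λ i`⁰-extensions of the semigroups with zero `S i`: the element `none` is the zero,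
and a non-zero element is a triple `(α, s, β)` with `s` a non-zero element of some
`S i` and `α, β ∈ Λ i`. -/
abbrev OSumZ (I : Type u) (Λ : I → Type v) (S : I → Type w) [∀ i, Zero (S i)] :=
  Option (Σ i : I, Λ i × {s : S i // s ≠ 0} × Λ i)

open Classical in
/-- The multiplication of the orthogonal sum `∑_{i∈I} B⁰_{Λ i}(S i)`:
`(α,a,β)·(γ,b,δ) = (α,ab,δ)` if the two factors lie in the same summand `i`, `β = γ`
and `ab ≠ 0` in `S i`; all other products are the zero `none`. -/
noncomputable def osMulZ {I : Type u} {Λ : I → Type v} {S : I → Type w}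
    [∀ i, SemigroupWithZero (S i)] :
    OSumZ I Λ S → OSumZ I Λ S → OSumZ I Λ S
  | some ⟨i, α, a, β⟩, some ⟨j, γ, b, δ⟩ =>
      if h : i = j then
        match j, h, γ, b, δ with
        | _, rfl, γ, b, δ =>
          if β = γ then
            if hzero : a.1 * b.1 = 0 then none
            else some ⟨i, α, ⟨a.1 * b.1, hzero⟩, δ⟩
          else none
      else none
  | _, _ => none

/-- The subset `(S_i)*_{α,β} = {(α,s,β) : s ∈ S i, s ≠ 0}` of the orthogonal sum. -/
def osStar {I : Type u} (Λ : I → Type v) (S : I → Type w) [∀ i, Zero (S i)]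
    (i : I) (α β : Λ i) : Set (OSumZ I Λ S) :=
  {x | ∃ s : {s : S i // s ≠ 0}, x = some ⟨i, α, s, β⟩}

section SemigroupWithZero

variable {I : Type u} {Λ : I → Type v} {S : I → Type w} [∀ i, SemigroupWithZero (S i)]

theorem osMulZ_some_left_ne_none_iff {i : I} {α β : Λ i} {a : {s : S i // s ≠ 0}}
    {x : OSumZ I Λ S} :
    osMulZ (some ⟨i, α, a, β⟩) x ≠ none ↔
      ∃ (b : {s : S i // s ≠ 0}) (δ : Λ i), x = some ⟨i, β, b, δ⟩ ∧ a.1 * b.1 ≠ 0 := by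
  constructor
  · intro hx
    rcases x with _ | ⟨j, γ, b, δ⟩
    · simp [osMulZ] at hx
    obtain rfl : i = j := by
      by_contra hij
      simp [osMulZ, hij] at hx
    obtain ⟨rfl, hab⟩ : β = γ ∧ a.1 * b.1 ≠ 0 := by simpa [osMulZ] using hx
    exact ⟨b, δ, rfl, hab⟩
  · rintro ⟨b, δ, rfl, hab⟩
    simp [osMulZ, hab]

theorem osMulZ_some_right_ne_none_iff {i : I} {α β : Λ i} {b : {s : S i // s ≠ 0}}
    {x : OSumZ I Λ S} :
    osMulZ x (some ⟨i, α, b, β⟩) ≠ none ↔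
      ∃ (a : {s : S i // s ≠ 0}) (γ : Λ i), x = some ⟨i, γ, a, α⟩ ∧ a.1 * b.1 ≠ 0 := by
  constructor
  · intro hx
    rcases x with _ | ⟨j, γ, a, δ⟩
    · simp [osMulZ] at hx
    obtain rfl : j = i := by
      by_contra hji
      simp [osMulZ, hji] at hx
    obtain ⟨rfl, hab⟩ : δ = α ∧ a.1 * b.1 ≠ 0 := by simpa [osMulZ] using hx
    exact ⟨a, γ, rfl, hab⟩
  · rintro ⟨a, γ, rfl, hab⟩
    simp [osMulZ, hab]

theorem mem_osStar_of_osMulZ_ne_none {i : I} {α α' β β' : Λ i} {e f : {s : S i // s ≠ 0}}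
    {x : OSumZ I Λ S} (hl : osMulZ (some ⟨i, α', e, α⟩) x ≠ none)
    (hr : osMulZ x (some ⟨i, β, f, β'⟩) ≠ none) : x ∈ osStar Λ S i α β := by
  obtain ⟨s, δ, rfl, -⟩ := osMulZ_some_left_ne_none_iff.mp hl
  obtain ⟨t, γ, hst, -⟩ := osMulZ_some_right_ne_none_iff.mp hr
  cases hst
  exact ⟨s, rfl⟩

theorem exists_isOpen_subset_osStar [TopologicalSpace (OSumZ I Λ S)]
    (hclosed : IsClosed {(none : OSumZ I Λ S)})
    (contL : ∀ a : OSumZ I Λ S, Continuous fun x => osMulZ a x)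
    (contR : ∀ a : OSumZ I Λ S, Continuous fun x => osMulZ x a)
    {i : I} (α β : Λ i) {g : {s : S i // s ≠ 0}}
    (hleft : ∃ e : S i, e * g.1 ≠ 0) (hright : ∃ f : S i, g.1 * f ≠ 0) :
    ∃ U : Set (OSumZ I Λ S), IsOpen U ∧ some ⟨i, α, g, β⟩ ∈ U ∧ U ⊆ osStar Λ S i α β := by
  obtain ⟨e, heg⟩ := hleft
  obtain ⟨f, hgf⟩ := hright
  let eα : OSumZ I Λ S := some ⟨i, α, ⟨e, left_ne_zero_of_mul heg⟩, α⟩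
  let fβ : OSumZ I Λ S := some ⟨i, β, ⟨f, right_ne_zero_of_mul hgf⟩, β⟩
  refine ⟨{x | osMulZ eα x ≠ none} ∩ {x | osMulZ x fβ ≠ none}, ?_, ⟨?_, ?_⟩, ?_⟩
  · exact (hclosed.isOpen_compl.preimage (contL eα)).inter
      (hclosed.isOpen_compl.preimage (contR fβ))
  · exact osMulZ_some_left_ne_none_iff.mpr ⟨g, β, rfl, heg⟩
  · exact osMulZ_some_right_ne_none_iff.mpr ⟨g, α, rfl, hgf⟩
  · exact fun x ⟨hl, hr⟩ => mem_osStar_of_osMulZ_ne_none hl hr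

theorem stmt_5_general [TopologicalSpace (OSumZ I Λ S)]
    (hleft : ∀ (i : I) (s : S i), s ≠ 0 → ∃ e : S i, e * s ≠ 0)
    (hright : ∀ (i : I) (s : S i), s ≠ 0 → ∃ f : S i, s * f ≠ 0)
    (hclosed : IsClosed {(none : OSumZ I Λ S)})
    (contL : ∀ a : OSumZ I Λ S, Continuous fun x => osMulZ a x)
    (contR : ∀ a : OSumZ I Λ S, Continuous fun x => osMulZ x a) :
    (∀ (i : I) (α β : Λ i) (g : {s : S i // s ≠ 0}),
        ∃ U : Set (OSumZ I Λ S), IsOpen U ∧ some ⟨i, α, g, β⟩ ∈ U ∧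
          U ⊆ osStar Λ S i α β) ∧
    (∀ (i : I) (α β : Λ i), IsOpen (osStar Λ S i α β)) := by
  have hnhd (i : I) (α β : Λ i) (g : {s : S i // s ≠ 0}) :=
    exists_isOpen_subset_osStar hclosed contL contR α β (hleft i g g.2) (hright i g g.2)
  refine ⟨hnhd, fun i α β => isOpen_iff_forall_mem_open.mpr ?_⟩
  rintro _ ⟨g, rfl⟩
  obtain ⟨U, hU, hgU, hsub⟩ := hnhd i α β g
  exact ⟨U, hsub, hU, hgU⟩

end SemigroupWithZero

/-- in a Hausdorff topology on the orthogonal sum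
`S = ∑_{i∈I} B⁰_{Λ i}(S i)` of Brandt `Λ i`⁰-extensions of monoids with zero
(`1 ≠ 0`) for which multiplication is separately continuous, every non-zero element
`(α,g,β)` has an open neighbourhood contained in `(S_i)*_{α,β}`; consequently every
set `(S_i)*_{α,β}` is open. -/
theorem stmt_5 {I : Type u} {Λ : I → Type v} {S : I → Type w}
    [∀ i, MonoidWithZero (S i)] (hone : ∀ i, (1 : S i) ≠ 0)
    [∀ i, Nonempty (Λ i)]
    [TopologicalSpace (OSumZ I Λ S)] [T2Space (OSumZ I Λ S)]
    (contL : ∀ a : OSumZ I Λ S, Continuous fun x => osMulZ a x)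
    (contR : ∀ a : OSumZ I Λ S, Continuous fun x => osMulZ x a) :
    (∀ (i : I) (α β : Λ i) (g : {s : S i // s ≠ 0}),
        ∃ U : Set (OSumZ I Λ S), IsOpen U ∧ some ⟨i, α, g, β⟩ ∈ U ∧
          U ⊆ osStar Λ S i α β) ∧
    (∀ (i : I) (α β : Λ i), IsOpen (osStar Λ S i α β)) := by
  exact stmt_5_general (fun _ s hs => ⟨1, by rwa [one_mul]⟩) (fun _ s hs => ⟨1, by rwa [mul_one]⟩)
    isClosed_singleton contL contR
end
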